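/- arXiv:1001.0304 — 3 statements merged into one kernel-verified Lean document; each statement's English description precedes it below -/
import Mathlib

section
/- (Orlando's formula) Let $f$ be a monic real polynomial of degree $n \ge 2$ with complex roots $s_1,\ldots,s_n$ counted with multiplicity, and let $\Delta_{n-1}$ be the $(n-1)$-th leading principal minor of the Hurwitz matrix of $f$. Then, as complex numbers, $\Delta_{n-1} = (-1)^{n(n-1)/2} \prod_{1 \le i < j \le n} (s_i + s_j)$. -/
/-!
Reversing the order of the rows and of the columns turns the `(n-1)`-th Hurwitz minor of `f` into
the determinant `D(f)` whose rows are the odd-degree coefficients of `f, X f, X² f, …`. Everything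
follows from `D((X - s) f) = f(-s) D(f)` by induction on the number of roots, since
`f(-s) = (-1)^n ∏ (s + s_i)`.

The rows of `D((X - s) f)` come from `X^i (X - s) f`. From bottom to top, add to each row `s`
times the one above it: this replaces `X^(i+1)` by `X^i (X + s)`, so that all rows but the first now
come from `X^i (X² - s²) f`.
The factor `X² - s²` relates coefficients of degrees of equal parity, so it is undone by column
operations: from right to left, add `s²` times each column to the previous one. These operations
clear the first column below its top entry, where they sum the coefficients of `f` to `f(-s)`, and
leave `D(f)` in the complementary block.
-/

open Polynomial Matrix

/-- The `n × n` Hurwitz matrix of a real polynomial `f = a_n x^n + ⋯ + a_0`: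
its `(i,j)` entry (with `1`-based indices) is `a_{n - 2j + i}`, with the convention
that `a_k = 0` for `k < 0` or `k > n`. Here `i j : Fin n` are `0`-based. -/
noncomputable def hurwitzMatrix (n : ℕ) (f : Polynomial ℝ) : Matrix (Fin n) (Fin n) ℝ :=
  fun i j =>
    let e : ℤ := (n : ℤ) - 2 * ((j : ℕ) + 1) + ((i : ℕ) + 1)
    if 0 ≤ e ∧ e ≤ (n : ℤ) then f.coeff e.toNat else 0

/-- The `k`-th leading principal minor of a square matrix. -/
noncomputable def leadingPrincipalMinor {n : ℕ} (M : Matrix (Fin n) (Fin n) ℝ)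
    (k : ℕ) (hk : k ≤ n) : ℝ :=
  (M.submatrix (Fin.castLE hk) (Fin.castLE hk)).det

section Hurwitz

variable {R : Type*}

theorem coeff_iterate_divX [Semiring R] (f : R[X]) (k l : ℕ) :
    (divX^[k] f).coeff l = f.coeff (l + k) := by
  induction k generalizing l with
  | zero => rfl
  | succ k ih => rw [Function.iterate_succ_apply', coeff_divX, ih, Nat.succ_add_eq_add_succ]

theorem iterate_divX_eq_zero [Semiring R] {f : R[X]} {k : ℕ} (hf : f.natDegree < k) :
    divX^[k] f = 0 := by
  ext l
  rw [coeff_iterate_divX, coeff_eq_zero_of_natDegree_lt (by omega), coeff_zero]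

theorem eval_iterate_divX [CommSemiring R] (f : R[X]) (x : R) (k : ℕ) :
    (divX^[k] f).eval x = f.coeff k + x * (divX^[k + 1] f).eval x := by
  conv_lhs => rw [← X_mul_divX_add (divX^[k] f)]
  simp [coeff_iterate_divX, Function.iterate_succ_apply', add_comm]

/-- The leading principal `m × m` submatrix of the Hurwitz matrix of a polynomial `f` of degree
`m + 1`, with both rows and columns in reverse order. With `0`-based indices its `(i, j)` entry is
the coefficient `a_{2j+1-i}` of `f`, taken from `X ^ i * f` so that it is `0` when `2j + 1 < i`. -/
noncomputable def revHurwitz [Semiring R] (f : R[X]) (m : ℕ) : Matrix (Fin m) (Fin m) R :=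
  of fun i j => (X ^ (i : ℕ) * f).coeff (2 * j + 1)

theorem map_revHurwitz {S : Type*} [Semiring R] [Semiring S] (φ : R →+* S) (f : R[X]) (m : ℕ) :
    (revHurwitz f m).map φ = revHurwitz (f.map φ) m := by
  ext i j
  simp [revHurwitz, ← coeff_map]

theorem leadingPrincipalMinor_hurwitzMatrix {n : ℕ} {f : ℝ[X]} (hf : f.natDegree ≤ n) :
    leadingPrincipalMinor (hurwitzMatrix n f) (n - 1) (Nat.sub_le n 1) =
      (revHurwitz f (n - 1)).det := by
  rw [leadingPrincipalMinor, ← det_submatrix_equiv_self Fin.revPerm (revHurwitz f (n - 1))]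
  congr 1
  ext i j
  simp only [submatrix_apply, hurwitzMatrix, revHurwitz, of_apply, Fin.revPerm_apply,
    Fin.val_castLE, Fin.val_rev, coeff_X_pow_mul']
  split_ifs with hwindow hpos hpos
  · congr 1
    omega
  · omega
  · exact (coeff_eq_zero_of_natDegree_lt (by omega)).symm
  · rfl

variable [CommRing R]

theorem det_sub_mul_next_col {m : ℕ} (F : Fin m → ℕ → R) (c : R) (hF : ∀ i, F i m = 0) :
    (of fun i j : Fin m => F i j - c * F i (j + 1)).det = (of fun i j : Fin m => F i j).det := by
  obtain _ | m := m
  · simp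
  rw [← det_submatrix_equiv_self Fin.revPerm,
    ← det_submatrix_equiv_self Fin.revPerm (of fun i j : Fin (m + 1) => F i j)]
  refine (det_eq_of_forall_col_eq_smul_add_pred (fun _ => c) (fun i => ?_) fun i j => ?_).symm
  · simp [hF]
  · simp [Fin.rev_succ, Fin.rev_castSucc]

theorem det_of_col_zero_succ_eq_zero {m : ℕ} (A : Matrix (Fin (m + 1)) (Fin (m + 1)) R)
    (hA : ∀ i : Fin m, A i.succ 0 = 0) :
    A.det = A 0 0 * (A.submatrix Fin.succ Fin.succ).det := by
  simp [det_succ_column_zero, Fin.sum_univ_succ, hA]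

theorem coeff_X_sub_C_mul_eq_eval_iterate_divX (f : R[X]) (s : R) (k : ℕ) :
    ((X - C s) * f).coeff (k + 1) =
      (divX^[k] f).eval (-s) - s ^ 2 * (divX^[k + 2] f).eval (-s) := by
  rw [eval_iterate_divX f (-s) k, eval_iterate_divX f (-s) (k + 1)]
  simp only [sub_mul, coeff_sub, coeff_X_mul, coeff_C_mul]
  ring

theorem coeff_X_mul_X_sub_C_mul (g : R[X]) (s : R) (k : ℕ) :
    (X * ((X - C s) * g)).coeff (k + 1) =
      (X * g).coeff k - s ^ 2 * (X * g).coeff (k + 2) + -s * ((X - C s) * g).coeff (k + 1) := by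
  simp only [sub_mul, coeff_sub, coeff_X_mul, coeff_C_mul]
  ring

/-- The rows of `revHurwitz ((X - C s) * f) (m + 1)` after the row and column operations that split
off the factor `X - C s`. Columns are indexed by `ℕ` so that the column following the last one can
be named; entry `k` of the top row is the sum `∑ l, (-s) ^ l * f.coeff (2 * k + l)`. -/
noncomputable def eliminatedRows (f : R[X]) (s : R) (m : ℕ) : Fin (m + 1) → ℕ → R :=
  Fin.cons (fun k => (divX^[2 * k] f).eval (-s)) fun i k => (X ^ (i + 1 : ℕ) * f).coeff (2 * k)

theorem eliminatedRows_eq_zero {f : R[X]} {m : ℕ} (hf : f.natDegree ≤ m + 1) (s : R)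
    (i : Fin (m + 1)) : eliminatedRows f s m i (m + 1) = 0 := by
  cases i using Fin.cases with
  | zero => simp [eliminatedRows, iterate_divX_eq_zero (show f.natDegree < 2 * (m + 1) by omega)]
  | succ i =>
    rw [eliminatedRows, Fin.cons_succ, coeff_X_pow_mul', if_pos (by omega)]
    exact coeff_eq_zero_of_natDegree_lt (by omega)

theorem det_revHurwitz_X_sub_C_mul_eq_det_sub (f : R[X]) (s : R) (m : ℕ) :
    (revHurwitz ((X - C s) * f) (m + 1)).det =
      (of fun i j : Fin (m + 1) =>
        eliminatedRows f s m i j - s ^ 2 * eliminatedRows f s m i (j + 1)).det := by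
  refine det_eq_of_forall_row_eq_smul_add_pred (fun _ => -s) (fun j => ?_) fun i j => ?_
  · simpa [revHurwitz, eliminatedRows, mul_add, -Function.iterate_succ] using
      coeff_X_sub_C_mul_eq_eval_iterate_divX f s (2 * j)
  · simpa [revHurwitz, eliminatedRows, pow_succ', mul_add, mul_assoc,
      mul_left_comm (X ^ (i : ℕ))] using coeff_X_mul_X_sub_C_mul (X ^ (i : ℕ) * f) s (2 * j)

theorem det_eliminatedRows (f : R[X]) (s : R) (m : ℕ) :
    (of fun i j : Fin (m + 1) => eliminatedRows f s m i j).det =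
      f.eval (-s) * (revHurwitz f m).det := by
  rw [det_of_col_zero_succ_eq_zero]
  · congr 2
    ext i j
    simp [eliminatedRows, revHurwitz, pow_succ', mul_assoc, mul_add]
  · intro i
    simp [eliminatedRows, pow_succ', mul_assoc]

theorem det_revHurwitz_X_sub_C_mul {f : R[X]} {m : ℕ} (hf : f.natDegree ≤ m + 1) (s : R) :
    (revHurwitz ((X - C s) * f) (m + 1)).det = f.eval (-s) * (revHurwitz f m).det := by
  rw [det_revHurwitz_X_sub_C_mul_eq_det_sub,
    det_sub_mul_next_col _ _ (eliminatedRows_eq_zero hf s), det_eliminatedRows]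

theorem natDegree_prod_X_sub_C_le {n : ℕ} (s : Fin n → R) : (∏ i, (X - C (s i))).natDegree ≤ n :=
  (natDegree_prod_le _ _).trans <|
    (Finset.sum_le_sum fun i _ => natDegree_X_sub_C_le (s i)).trans (by simp)

theorem eval_neg_prod_X_sub_C {n : ℕ} (s : Fin n → R) (x : R) :
    (∏ i, (X - C (s i))).eval (-x) = (-1) ^ n * ∏ i, (x + s i) := by
  simp [eval_prod, ← neg_add', Finset.prod_neg, -neg_add_rev]

theorem det_revHurwitz_prod_X_sub_C {n : ℕ} (s : Fin n → R) :
    (revHurwitz (∏ i, (X - C (s i))) (n - 1)).det =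
      (-1) ^ (n * (n - 1) / 2) * ∏ i, ∏ j ∈ Finset.Ioi i, (s i + s j) := by
  induction n with
  | zero => simp
  | succ n ih =>
    obtain _ | m := n
    · simp
    calc (revHurwitz (∏ i, (X - C (s i))) (m + 1)).det
        = (∏ i : Fin (m + 1), (X - C (s i.succ))).eval (-s 0) *
            (revHurwitz (∏ i : Fin (m + 1), (X - C (s i.succ))) m).det := by
          rw [Fin.prod_univ_succ]
          exact det_revHurwitz_X_sub_C_mul (natDegree_prod_X_sub_C_le _) _
      _ = (-1) ^ (m + 1) * (∏ j : Fin (m + 1), (s 0 + s j.succ)) *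
            ((-1) ^ ((m + 1) * (m + 1 - 1) / 2) *
              ∏ i : Fin (m + 1), ∏ j ∈ Finset.Ioi i, (s i.succ + s j.succ)) := by
          rw [eval_neg_prod_X_sub_C]
          exact congrArg _ (ih fun i => s i.succ)
      _ = (-1) ^ ((m + 1 + 1) * (m + 1 + 1 - 1) / 2) *
            ∏ i, ∏ j ∈ Finset.Ioi i, (s i + s j) := by
          rw [Nat.triangle_succ (m + 1),
            Fin.prod_univ_succ fun i => ∏ j ∈ Finset.Ioi i, (s i + s j), Fin.prod_Ioi_zero]
          simp only [Fin.prod_Ioi_succ]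
          ring

theorem orlando_formula_general {S : Type*} [CommRing S] (φ : R →+* S) {n : ℕ}
    (f : R[X]) (s : Fin n → S) (hroots : f.map φ = ∏ i, (X - C (s i))) :
    φ (revHurwitz f (n - 1)).det =
      (-1) ^ (n * (n - 1) / 2) * ∏ i, ∏ j ∈ Finset.Ioi i, (s i + s j) := by
  rw [RingHom.map_det, RingHom.mapMatrix_apply, map_revHurwitz, hroots,
    det_revHurwitz_prod_X_sub_C]

end Hurwitz

/-- **Orlando's formula.** If `f` is a monic real polynomial of degree `n ≥ 2` whose
complex roots, counted with multiplicity, are `s 0, …, s (n-1)` (i.e. `f` factors over `ℂ`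
as `∏ i, (X - C (s i))`), then the `(n-1)`-th leading principal minor of the Hurwitz
matrix of `f` equals `(-1)^(n(n-1)/2) ∏_{i < j} (s i + s j)`. -/
theorem orlando_formula (n : ℕ) (hn : 2 ≤ n) (f : Polynomial ℝ)
    (hmonic : f.Monic) (hdeg : f.natDegree = n) (s : Fin n → ℂ)
    (hroots : f.map (algebraMap ℝ ℂ) = ∏ i, (X - C (s i))) :
    (leadingPrincipalMinor (hurwitzMatrix n f) (n - 1) (Nat.sub_le n 1) : ℂ) =
      (-1) ^ (n * (n - 1) / 2) * ∏ i, ∏ j ∈ Finset.Ioi i, (s i + s j) := by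
  rw [leadingPrincipalMinor_hurwitzMatrix hdeg.le]
  exact orlando_formula_general (algebraMap ℝ ℂ) f s hroots
end

section
/- Let $f$ be a monic real polynomial of degree $n \ge 1$ all of whose complex roots have negative real part. Then the constant coefficient of $f$ satisfies $f(0) > 0$, and the $(n-1)$-th leading principal minor $\Delta_{n-1}$ of the Hurwitz matrix of $f$ satisfies $\Delta_{n-1} > 0$. -/
open Polynomial Matrix

/-!
The determinant `Δ_{n-1}` never vanishes on stable polynomials of degree `n`: a linear relation
between the rows of its matrix is a polynomial `V` of degree at most `n - 2` such that
`V(x) f(x) = V(-x) f(-x)`. Since `f(x)` and `f(-x)` have no common root, `f` divides `V(-x)`, hence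
`V = 0`. Nor does `f(0)` vanish.

The sign of both quantities is therefore constant along paths of stable polynomials of degree `n`.
Moving all roots of `f` to `-1` along straight lines reduces the theorem to `a (x + 1) ^ n`. The
value at `0` is then `a`. For the determinant, induct on `n` along the path
`a (x + 1) ^ n (1 + t x)`, `0 ≤ t ≤ 1`: at `t = 0` it starts at `a (x + 1) ^ n` in formal degree
`n + 1`, where the determinant is `a` times that of formal degree `n`.
-/

/-- A real polynomial is *stable* when its leading coefficient is positive and all its complex
roots lie in the open left half-plane. -/
def HurwitzStable (f : ℝ[X]) : Prop :=
  0 < f.leadingCoeff ∧ ∀ z : ℂ, aeval z f = 0 → z.re < 0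

/-- The `m × m` leading block of the Hurwitz matrix of `f`, where `f` is regarded as a polynomial
of formal degree `m + 1`. In `0`-based indices its `(i, j)` entry is `a_{m - 2j + i}`; multiplying
`f` by `X ^ (2 * j)` avoids the subtraction and makes the coefficients of negative index vanish. -/
noncomputable def hurwitzBlock {R : Type*} [Semiring R] (m : ℕ) (f : R[X]) :
    Matrix (Fin m) (Fin m) R :=
  Matrix.of fun i j => (X ^ (2 * (j : ℕ)) * f).coeff (m + i)

lemma hurwitzBlock_apply {R : Type*} [Semiring R] (m : ℕ) (f : R[X]) (i j : Fin m) :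
    hurwitzBlock m f i j = (X ^ (2 * (j : ℕ)) * f).coeff (m + i) :=
  rfl

lemma submatrix_hurwitzMatrix_castSucc {m : ℕ} {f : ℝ[X]} (hdeg : f.natDegree ≤ m + 1) :
    (hurwitzMatrix (m + 1) f).submatrix Fin.castSucc Fin.castSucc = hurwitzBlock m f := by
  ext i j
  simp only [hurwitzMatrix, submatrix_apply, hurwitzBlock_apply, coeff_X_pow_mul',
    Fin.val_castSucc]
  by_cases hneg : 2 * (j : ℕ) ≤ m + i
  · rw [if_pos hneg]
    split_ifs with hle
    · congr 1
      omega
    · exact (coeff_eq_zero_of_natDegree_lt (by omega)).symm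
  · rw [if_neg hneg, if_neg (by omega)]

lemma leadingPrincipalMinor_hurwitzMatrix_s6 {m : ℕ} {f : ℝ[X]} (hdeg : f.natDegree ≤ m + 1) :
    leadingPrincipalMinor (hurwitzMatrix (m + 1) f) m m.le_succ = (hurwitzBlock m f).det :=
  congrArg det (submatrix_hurwitzMatrix_castSucc hdeg)

/-- Raising the formal degree by one above the true degree `m + 1` prepends a column whose only
nonzero entry is the leading coefficient, at the top. -/
lemma det_hurwitzBlock_succ {R : Type*} [CommRing R] {m : ℕ} {f : R[X]}
    (hdeg : f.natDegree = m + 1) :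
    (hurwitzBlock (m + 1) f).det = f.leadingCoeff * (hurwitzBlock m f).det := by
  have htop : hurwitzBlock (m + 1) f 0 0 = f.leadingCoeff := by
    simp [hurwitzBlock_apply, leadingCoeff, hdeg]
  have hcol (i : Fin m) : hurwitzBlock (m + 1) f i.succ 0 = 0 := by
    simpa [hurwitzBlock_apply] using coeff_eq_zero_of_natDegree_lt (by omega)
  have hminor : (hurwitzBlock (m + 1) f).submatrix Fin.succ Fin.succ = hurwitzBlock m f := by
    ext i j
    rw [submatrix_apply, hurwitzBlock_apply, hurwitzBlock_apply, Fin.val_succ, Fin.val_succ,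
      mul_add, add_comm _ (2 * 1), pow_add, mul_assoc, ← coeff_X_pow_mul _ 2 (m + i)]
    congr 1
    omega
  simp [det_succ_column_zero, Fin.sum_univ_succ, htop, hcol, hminor]

section Nonvanishing

variable {R : Type*} [CommRing R] {m : ℕ} {f : R[X]}

lemma comp_neg_X_eq_self_of_coeff_odd_eq_zero {p : R[X]} (hp : ∀ k, Odd k → p.coeff k = 0) :
    p.comp (-X) = p := by
  ext k
  rw [show (-X : R[X]) = C (-1) * X by simp, comp_C_mul_X_coeff]
  rcases Nat.even_or_odd k with hk | hk
  · rw [hk.neg_one_pow, mul_one]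
  · rw [hp k hk, zero_mul]

lemma eq_zero_of_comp_neg_X_mul_eq_self [IsDomain R] {p : R[X]} (hf : IsCoprime f (f.comp (-X)))
    (heven : (p * f).comp (-X) = p * f) (hdeg : p.natDegree < f.natDegree) : p = 0 := by
  have hdvd : f ∣ p.comp (-X) :=
    hf.dvd_of_dvd_mul_right ⟨p, by rw [← mul_comp, heven, mul_comm]⟩
  exact comp_neg_X_eq_zero_iff.1 (eq_zero_of_dvd_of_natDegree_lt hdvd (by
    simpa [natDegree_comp] using hdeg))

lemma coeff_ofFn_mul_eq_vecMul_hurwitzBlock [DecidableEq R] (v : Fin m → R) (l : Fin m) :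
    (ofFn m v * f).coeff (2 * l + 1) = ((v ∘ Fin.rev) ᵥ* hurwitzBlock m f) l.rev := by
  have hshift (i : Fin m) : (X ^ (i : ℕ) * f).coeff (2 * l + 1) =
      hurwitzBlock m f i.rev l.rev := by
    rw [hurwitzBlock_apply, coeff_X_pow_mul', coeff_X_pow_mul']
    grind
  rw [ofFn_eq_sum_monomial, Finset.sum_mul, finsetSum_coeff, vecMul, dotProduct,
    ← Equiv.sum_comp Fin.revPerm]
  simp [← C_mul_X_pow_eq_monomial, mul_assoc, hshift, -Fin.val_rev]

lemma det_hurwitzBlock_ne_zero_of_isCoprime [IsDomain R] (hf : IsCoprime f (f.comp (-X)))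
    (hdeg : f.natDegree = m + 1) : (hurwitzBlock m f).det ≠ 0 := by
  classical
  intro hdet
  obtain ⟨v, hv, hrel⟩ := exists_vecMul_eq_zero_iff.2 hdet
  have hm : 0 < m := Fin.pos_iff_nonempty.2 (Function.ne_iff.1 hv).nonempty
  have hV : (ofFn m (v ∘ Fin.rev)).natDegree < m := ofFn_natDegree_lt hm _
  have hodd (k : ℕ) (hk : Odd k) : (ofFn m (v ∘ Fin.rev) * f).coeff k = 0 := by
    obtain ⟨l, rfl⟩ := hk
    rcases lt_or_ge l m with hl | hl
    · have hcoeff := coeff_ofFn_mul_eq_vecMul_hurwitzBlock (f := f) (v ∘ Fin.rev) ⟨l, hl⟩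
      rwa [Function.comp_assoc, Fin.rev_involutive.comp_self, Function.comp_id, hrel] at hcoeff
    · exact coeff_eq_zero_of_natDegree_lt (natDegree_mul_le.trans_lt (by omega))
  have hzero : ofFn m (v ∘ Fin.rev) = 0 :=
    eq_zero_of_comp_neg_X_mul_eq_self hf (comp_neg_X_eq_self_of_coeff_odd_eq_zero hodd)
      (by omega)
  have hrev : v ∘ Fin.rev = 0 := by
    rw [← toFn_comp_ofFn_eq_id m (v ∘ Fin.rev), hzero, map_zero]
  exact hv (funext fun i => by simpa using congrFun hrev i.rev)

end Nonvanishing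

/-- Continuity of a family of polynomials, tested on each coefficient because `R[X]` carries no
topology. -/
def CoeffContinuous {R T : Type*} [Semiring R] [TopologicalSpace R] [TopologicalSpace T]
    (p : T → R[X]) : Prop :=
  ∀ k, Continuous fun t => (p t).coeff k

lemma CoeffContinuous.det_hurwitzBlock {R T : Type*} [CommRing R] [TopologicalSpace R]
    [IsTopologicalRing R] [TopologicalSpace T] {p : T → R[X]} (hp : CoeffContinuous p) (m : ℕ) :
    Continuous fun t => (hurwitzBlock m (p t)).det := by
  refine Continuous.matrix_det (continuous_matrix fun i j => ?_)
  simp only [hurwitzBlock_apply, coeff_X_pow_mul']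
  split_ifs
  · exact hp _
  · exact continuous_const

lemma coeffContinuous_taylor_scaleRoots {R : Type*} [CommRing R] [TopologicalSpace R]
    [IsTopologicalRing R] (f : R[X]) :
    CoeffContinuous fun t : R => taylor (1 - t) (f.scaleRoots t) := by
  intro k
  have hcoeff (t : R) : (taylor (1 - t) (f.scaleRoots t)).coeff k =
      ∑ i ∈ Finset.range (f.natDegree + 1),
        f.coeff i * t ^ (f.natDegree - i) * ((1 - t) ^ (i - k) * (i.choose k : R)) := by
    rw [as_sum_range_C_mul_X_pow (f.scaleRoots t), map_sum, finsetSum_coeff, natDegree_scaleRoots]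
    simp only [taylor_mul, taylor_C, taylor_X_pow, coeff_C_mul, coeff_X_add_C_pow,
      coeff_scaleRoots]
  simp only [hcoeff]
  fun_prop

lemma pos_of_forall_Ioc_ne_zero {F : ℝ → ℝ} {a b : ℝ} (hab : a ≤ b)
    (hF : ContinuousOn F (Set.Icc a b)) (ha : 0 < F a) (hne : ∀ t ∈ Set.Ioc a b, F t ≠ 0) :
    0 < F b := by
  by_contra! hb
  obtain ⟨t, ht, hzero⟩ := intermediate_value_Icc' hab hF ⟨hb, ha.le⟩
  rcases ht.1.eq_or_lt with rfl | hat
  · exact ha.ne' hzero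
  · exact hne t ⟨hat, ht.2⟩ hzero

namespace HurwitzStable

variable {f g : ℝ[X]}

lemma ne_zero (hf : HurwitzStable f) : f ≠ 0 :=
  leadingCoeff_ne_zero.1 hf.1.ne'

lemma mul (hf : HurwitzStable f) (hg : HurwitzStable g) : HurwitzStable (f * g) := by
  refine ⟨by rw [leadingCoeff_mul]; exact mul_pos hf.1 hg.1, fun z hz => ?_⟩
  rw [map_mul, mul_eq_zero] at hz
  exact hz.elim (hf.2 z) (hg.2 z)

lemma C_mul_X_add_one {c : ℝ} (hc : 0 < c) : HurwitzStable (C c * X + 1) := by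
  refine ⟨by rwa [← C_1, leadingCoeff_linear hc.ne'], fun z hz => ?_⟩
  have hre : c * z.re + 1 = 0 := by simpa using congrArg Complex.re hz
  exact (pos_iff_neg_of_mul_neg (by linarith)).1 hc

lemma C_mul_pow_X_add_one {a : ℝ} (ha : 0 < a) (n : ℕ) :
    HurwitzStable (C a * (X + 1) ^ n) := by
  have hmonic : ((X + 1 : ℝ[X]) ^ n).Monic := by simpa using (monic_X_add_C (1 : ℝ)).pow n
  refine ⟨by rwa [leadingCoeff_mul_monic hmonic, leadingCoeff_C], fun z hz => ?_⟩
  have hz1 : z + 1 = 0 := by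
    simp only [map_mul, map_pow, map_add, aeval_X, map_one, aeval_C, mul_eq_zero] at hz
    exact eq_zero_of_pow_eq_zero (hz.resolve_left (by simpa using ha.ne'))
  simp [eq_neg_of_add_eq_zero_left hz1]

lemma taylor (hf : HurwitzStable f) {r : ℝ} (hr : 0 ≤ r) : HurwitzStable (taylor r f) := by
  refine ⟨by rw [leadingCoeff_taylor]; exact hf.1, fun z hz => ?_⟩
  have hre := hf.2 (z + r) (by simpa [taylor_apply, aeval_comp] using hz)
  rw [Complex.add_re, Complex.ofReal_re] at hre
  linarith

lemma scaleRoots (hf : HurwitzStable f) {t : ℝ} (ht : 0 < t) :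
    HurwitzStable (f.scaleRoots t) := by
  refine ⟨by rw [leadingCoeff_scaleRoots]; exact hf.1, fun z hz => ?_⟩
  have hroot := scaleRoots_aeval_eq_zero (r := t⁻¹) hz
  rw [← scaleRoots_mul, mul_inv_cancel₀ ht.ne', scaleRoots_one, Complex.coe_algebraMap] at hroot
  have hre := hf.2 _ hroot
  rw [Complex.re_ofReal_mul] at hre
  exact (pos_iff_neg_of_mul_neg hre).1 (inv_pos.2 ht)

lemma eval_zero_ne_zero (hf : HurwitzStable f) : f.eval 0 ≠ 0 := by
  intro h
  simpa using hf.2 0 (by simpa [h] using aeval_algebraMap_apply ℂ (0 : ℝ) f)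

lemma isCoprime_comp_neg_X (hf : HurwitzStable f) : IsCoprime f (f.comp (-X)) := by
  rw [isCoprime_iff_aeval_ne_zero_of_isAlgClosed ℝ ℂ]
  intro z
  by_contra! h
  have hpos := hf.2 (-z) (by simpa [aeval_comp] using h.2)
  rw [Complex.neg_re] at hpos
  linarith [hf.2 z h.1]

/-- The path is `taylor (1 - t) (f.scaleRoots t)`: its roots are `t z - (1 - t)` for the roots `z`
of `f`, so it leads from `a (x + 1) ^ n` at `t = 0` to `f` at `t = 1`. -/
lemma pos_of_forall_ne_zero {n : ℕ} {Φ : ℝ[X] → ℝ}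
    (hcont : ∀ p : ℝ → ℝ[X], CoeffContinuous p → Continuous fun t => Φ (p t))
    (hne : ∀ g, HurwitzStable g → g.natDegree = n → Φ g ≠ 0)
    (hbase : ∀ a, 0 < a → 0 < Φ (C a * (X + 1) ^ n))
    (hf : HurwitzStable f) (hdeg : f.natDegree = n) : 0 < Φ f := by
  have hend : Polynomial.taylor (1 - 1) (f.scaleRoots 1) = f := by simp
  rw [← hend]
  refine pos_of_forall_Ioc_ne_zero zero_le_one
    (hcont _ (coeffContinuous_taylor_scaleRoots f)).continuousOn ?_ fun t ht => ?_
  · simpa [hdeg, smul_eq_C_mul] using hbase _ hf.1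
  · exact hne _ ((hf.scaleRoots ht.1).taylor (sub_nonneg.2 ht.2)) (by simp [hdeg])

lemma det_hurwitzBlock_ne_zero {m : ℕ} (hf : HurwitzStable f) (hdeg : f.natDegree = m + 1) :
    (hurwitzBlock m f).det ≠ 0 :=
  det_hurwitzBlock_ne_zero_of_isCoprime hf.isCoprime_comp_neg_X hdeg

lemma det_hurwitzBlock_mul_linear_pos {m : ℕ} (hg : HurwitzStable g) (hdeg : g.natDegree = m + 1)
    (hpos : 0 < (hurwitzBlock m g).det) {c : ℝ} (hc : 0 < c) :
    0 < (hurwitzBlock (m + 1) (g * (C c * X + 1))).det := by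
  have hpath : CoeffContinuous fun t : ℝ => g * (C t * X + 1) := by
    intro k
    have hcoeff (t : ℝ) : (g * (C t * X + 1)).coeff k = t * (g * X).coeff k + g.coeff k := by
      rw [mul_add_one, mul_left_comm, coeff_add, coeff_C_mul]
    simp only [hcoeff]
    fun_prop
  refine pos_of_forall_Ioc_ne_zero hc.le (hpath.det_hurwitzBlock (m + 1)).continuousOn ?_
    fun t ht => ?_
  · simpa [det_hurwitzBlock_succ hdeg] using mul_pos hg.1 hpos
  · have hlin := C_mul_X_add_one ht.1
    refine (hg.mul hlin).det_hurwitzBlock_ne_zero ?_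
    rw [natDegree_mul hg.ne_zero hlin.ne_zero, hdeg, ← C_1, natDegree_linear ht.1.ne']

end HurwitzStable

lemma det_hurwitzBlock_C_mul_pow_X_add_one_pos {a : ℝ} (ha : 0 < a) (m : ℕ) :
    0 < (hurwitzBlock m (C a * (X + 1) ^ (m + 1))).det := by
  induction m with
  | zero => simp
  | succ m ih =>
    have hdeg : (C a * (X + 1) ^ (m + 1)).natDegree = m + 1 := by
      simpa [natDegree_C_mul ha.ne'] using natDegree_X_add_C (1 : ℝ)
    have hstable := HurwitzStable.C_mul_pow_X_add_one ha (m + 1)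
    simpa only [C_1, one_mul, mul_assoc, ← pow_succ] using
      hstable.det_hurwitzBlock_mul_linear_pos hdeg ih one_pos

lemma HurwitzStable.eval_zero_pos {f : ℝ[X]} (hf : HurwitzStable f) : 0 < f.eval 0 := by
  refine pos_of_forall_ne_zero (Φ := eval 0) (fun p hp => ?_) (fun g hg _ => hg.eval_zero_ne_zero)
    (fun a ha => by simpa using ha) hf rfl
  simpa only [coeff_zero_eq_eval_zero] using hp 0

lemma HurwitzStable.det_hurwitzBlock_pos {m : ℕ} {f : ℝ[X]} (hf : HurwitzStable f)
    (hdeg : f.natDegree = m + 1) : 0 < (hurwitzBlock m f).det :=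
  pos_of_forall_ne_zero (Φ := fun g => (hurwitzBlock m g).det) (fun _ hp => hp.det_hurwitzBlock m)
    (fun _ hg => hg.det_hurwitzBlock_ne_zero)
    (fun _ ha => det_hurwitzBlock_C_mul_pow_X_add_one_pos ha m) hf hdeg

theorem stable_poly_minors_pos_general (m : ℕ) (f : ℝ[X]) (hlead : 0 < f.leadingCoeff)
    (hdeg : f.natDegree = m + 1)
    (hroots : ∀ μ : ℂ, (f.map (algebraMap ℝ ℂ)).IsRoot μ → μ.re < 0) :
    0 < f.eval 0 ∧ 0 < leadingPrincipalMinor (hurwitzMatrix (m + 1) f) m m.le_succ := by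
  have hf : HurwitzStable f :=
    ⟨hlead, fun z hz => hroots z (by rw [IsRoot, eval_map_algebraMap, hz])⟩
  refine ⟨hf.eval_zero_pos, ?_⟩
  rw [leadingPrincipalMinor_hurwitzMatrix_s6 hdeg.le]
  exact hf.det_hurwitzBlock_pos hdeg

/-- If `f` is a monic real polynomial of degree `n ≥ 1` all of whose complex roots have
negative real part, then `f(0) > 0` and the `(n-1)`-th leading principal minor of the
Hurwitz matrix of `f` is positive. -/
theorem stable_poly_minors_pos (n : ℕ) (hn : 1 ≤ n) (f : Polynomial ℝ)
    (hmonic : f.Monic) (hdeg : f.natDegree = n)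
    (hroots : ∀ μ : ℂ, (f.map (algebraMap ℝ ℂ)).IsRoot μ → μ.re < 0) :
    0 < f.eval 0 ∧
      0 < leadingPrincipalMinor (hurwitzMatrix n f) (n - 1) (Nat.sub_le n 1) := by
  obtain ⟨m, rfl⟩ := Nat.exists_eq_succ_of_ne_zero (Nat.one_le_iff_ne_zero.1 hn)
  exact stable_poly_minors_pos_general m f (by simp [hmonic.leadingCoeff]) hdeg hroots
end

section
/- Let $f \in \mathbb{R}[x_1,\ldots,x_m]$ be a homogeneous polynomial of degree $d$, and let $k$ be a nonnegative integer. Suppose that for every sequence $\theta_1,\ldots,\theta_k$ of permutations of $\{1,\ldots,m\}$, the polynomial $g(\mathbf{y}) = f(A_{\theta_k}\cdots A_{\theta_1}\mathbf{y})$ has strictly positive coefficient on every monomial of total degree $d$ in $y_1,\ldots,y_m$ (i.e., $g$ has complete monomials with all positive coefficients). Then $f(x) > 0$ for all $x \in S_m$. -/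
/-!
Sorting the coordinates of a nonnegative vector `x` decreasingly and taking weighted consecutive
differences writes `x = A_θ y` with `y` nonnegative. Iterating, the images of the nonnegative
orthant under the `k`-fold products of WDS matrices cover the orthant. So a nonzero `x ≥ 0` is
`B y` for such a product `B` and some nonzero `y ≥ 0`, and `f x = g y` with `g = linSubst B f`.
If `y i > 0`, then the pure power of `y i` in `g` makes `g y` positive, since no term of `g y` is
negative.
-/

open Matrix

/-- The upper-triangular matrix `T_m` whose `(i,j)` entry (with `1`-based indices)
is `1/j` when `i ≤ j` and `0` otherwise. -/
noncomputable def Tmat (m : ℕ) : Matrix (Fin m) (Fin m) ℝ :=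
  fun i j => if i ≤ j then 1 / ((j : ℕ) + 1) else 0

/-- The permutation matrix of `θ`: its `(i,j)` entry is `1` if `j = θ i` and `0` otherwise. -/
def permMat {m : ℕ} (θ : Equiv.Perm (Fin m)) : Matrix (Fin m) (Fin m) ℝ :=
  fun i j => if θ i = j then 1 else 0

/-- The weighted difference substitution (WDS) matrix `A_θ = P_θ T_m`. -/
noncomputable def WDSmat {m : ℕ} (θ : Equiv.Perm (Fin m)) : Matrix (Fin m) (Fin m) ℝ :=
  permMat θ * Tmat m

/-- Substitution of the linear change of variables `x = B y` into a multivariate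
polynomial: each variable `xᵢ` is replaced by `∑ⱼ B i j * yⱼ`. -/
noncomputable def linSubst {m : ℕ} (B : Matrix (Fin m) (Fin m) ℝ)
    (f : MvPolynomial (Fin m) ℝ) : MvPolynomial (Fin m) ℝ :=
  MvPolynomial.bind₁ (fun i => ∑ j, MvPolynomial.C (B i j) * MvPolynomial.X j) f

/-- The product `A_{θ k} ⋯ A_{θ 1}` of the WDS matrices of a sequence of permutations. -/
noncomputable def WDSprod {m k : ℕ} (θ : Fin k → Equiv.Perm (Fin m)) :
    Matrix (Fin m) (Fin m) ℝ :=
  (List.ofFn fun i => WDSmat (θ i)).prod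

section PositiveCoefficients

variable {σ R : Type*} [CommSemiring R]

lemma coeff_nonneg_of_isHomogeneous [Preorder R] {g : MvPolynomial σ R} {d : ℕ}
    (hg : g.IsHomogeneous d) (h : ∀ α : σ →₀ ℕ, α.degree = d → 0 ≤ g.coeff α) (α : σ →₀ ℕ) :
    0 ≤ g.coeff α := by
  by_cases hα : α.degree = d
  · exact h α hα
  · exact (hg.coeff_eq_zero hα).ge

lemma eval_pos_of_coeff_nonneg [PartialOrder R] [IsStrictOrderedRing R] {g : MvPolynomial σ R}
    (hg : ∀ α, 0 ≤ g.coeff α) {i : σ} {n : ℕ} (hpow : 0 < g.coeff (Finsupp.single i n))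
    {y : σ → R} (hy : 0 ≤ y) (hi : 0 < y i) : 0 < MvPolynomial.eval y g := by
  have hterm : 0 < g.coeff (Finsupp.single i n) * (Finsupp.single i n).prod fun j e => y j ^ e := by
    rw [Finsupp.prod_single_index (h := fun j e => y j ^ e) (pow_zero _)]
    exact mul_pos hpow (pow_pos hi n)
  rw [MvPolynomial.eval_eq]
  exact Finset.sum_pos'
    (fun α _ => mul_nonneg (hg α) (Finset.prod_nonneg fun j _ => pow_nonneg (hy j) _))
    ⟨_, MvPolynomial.mem_support_iff.2 hpow.ne', hterm⟩

end PositiveCoefficients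

section LinearSubstitution

variable {m : ℕ} (B : Matrix (Fin m) (Fin m) ℝ)

lemma eval_linSubst (f : MvPolynomial (Fin m) ℝ) (y : Fin m → ℝ) :
    MvPolynomial.eval y (linSubst B f) = MvPolynomial.eval (B *ᵥ y) f := by
  simp only [linSubst, MvPolynomial.eval, MvPolynomial.eval₂Hom_bind₁]
  congr 2
  funext i
  simp [mulVec, dotProduct]

lemma isHomogeneous_linSubst {d : ℕ} {f : MvPolynomial (Fin m) ℝ} (hf : f.IsHomogeneous d) :
    (linSubst B f).IsHomogeneous d := by
  have hlinear (i : Fin m) : (∑ j, MvPolynomial.C (B i j) * MvPolynomial.X j).IsHomogeneous 1 :=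
    MvPolynomial.IsHomogeneous.sum _ _ _ fun j _ => MvPolynomial.isHomogeneous_C_mul_X _ j
  simpa only [one_mul, linSubst, MvPolynomial.aeval_eq_bind₁] using hf.aeval _ hlinear

end LinearSubstitution

lemma ne_zero_of_mem_stdSimplex {R ι : Type*} [Semiring R] [PartialOrder R] [Nontrivial R]
    [Fintype ι] {x : ι → R} (hx : x ∈ stdSimplex R ι) : x ≠ 0 := by
  rintro rfl
  simpa using hx.2

section ZeroExtend

variable {m : ℕ} {M : Type*} [Zero M]

/-- The extension of a finite sequence `z 0, …, z (m - 1)` to `ℕ` by zero, which supplies the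
convention `z_{m+1} = 0` of weighted differences. -/
noncomputable def zeroExtend (z : Fin m → M) : ℕ → M :=
  Function.extend Fin.val z 0

lemma zeroExtend_val (z : Fin m → M) (i : Fin m) : zeroExtend z i = z i :=
  Fin.val_injective.extend_apply z 0 i

lemma zeroExtend_of_le (z : Fin m → M) {n : ℕ} (hn : m ≤ n) : zeroExtend z n = 0 := by
  have hrange : ¬∃ i : Fin m, (i : ℕ) = n := by
    rintro ⟨i, rfl⟩
    exact i.isLt.not_ge hn
  rw [zeroExtend, Function.extend_apply' _ _ _ hrange, Pi.zero_apply]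

lemma antitone_zeroExtend [Preorder M] {z : Fin m → M} (hz : 0 ≤ z) (hanti : Antitone z) :
    Antitone (zeroExtend z) := by
  intro a b hab
  rcases lt_or_ge b m with hb | hb
  · rw [zeroExtend_val z ⟨a, hab.trans_lt hb⟩, zeroExtend_val z ⟨b, hb⟩]
    exact hanti hab
  · rw [zeroExtend_of_le z hb]
    rcases lt_or_ge a m with ha | ha
    · exact (hz ⟨a, ha⟩).trans_eq (zeroExtend_val z ⟨a, ha⟩).symm
    · exact (zeroExtend_of_le z ha).ge

end ZeroExtend

lemma sum_Ici_zeroExtend_sub {m : ℕ} {M : Type*} [AddCommGroup M] (z : Fin m → M) (i : Fin m) :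
    ∑ j ∈ Finset.Ici i, (zeroExtend z j - zeroExtend z (j + 1)) = z i := by
  calc ∑ j ∈ Finset.Ici i, (zeroExtend z j - zeroExtend z (j + 1))
      = ∑ n ∈ Finset.Ico (i : ℕ) m, (zeroExtend z n - zeroExtend z (n + 1)) := by
        rw [← Fin.map_valEmbedding_Ici, Finset.sum_map]
        rfl
    _ = -∑ n ∈ Finset.Ico (i : ℕ) m, (zeroExtend z (n + 1) - zeroExtend z n) := by
        simp only [← Finset.sum_neg_distrib, neg_sub]
    _ = z i := by
        rw [Finset.sum_Ico_sub _ i.isLt.le, zeroExtend_of_le z le_rfl, zeroExtend_val, zero_sub,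
          neg_neg]

section WeightedDifferences

variable {m : ℕ}

/-- The weighted differences `j (z_j - z_{j+1})` of `z` (`1`-based, with `z_{m+1} = 0`): the
preimage of `z` under `T_m`. -/
noncomputable def weightedDiff (z : Fin m → ℝ) (j : Fin m) : ℝ :=
  ((j : ℕ) + 1) * (zeroExtend z j - zeroExtend z (j + 1))

lemma weightedDiff_nonneg {z : Fin m → ℝ} (hz : 0 ≤ z) (hanti : Antitone z) :
    0 ≤ weightedDiff z := fun j =>
  mul_nonneg (by positivity) (sub_nonneg.2 (antitone_zeroExtend hz hanti (Nat.le_succ j)))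

lemma Tmat_mulVec_apply (y : Fin m → ℝ) (i : Fin m) :
    (Tmat m *ᵥ y) i = ∑ j ∈ Finset.Ici i, y j / ((j : ℕ) + 1) := by
  simp [mulVec, dotProduct, Tmat, ite_mul, ← Finset.sum_filter, Finset.filter_le_eq_Ici,
    div_eq_inv_mul]

lemma Tmat_mulVec_weightedDiff (z : Fin m → ℝ) : Tmat m *ᵥ weightedDiff z = z := by
  funext i
  have hweight (j : Fin m) : ((j : ℕ) : ℝ) + 1 ≠ 0 := by positivity
  simp only [Tmat_mulVec_apply, weightedDiff, mul_div_cancel_left₀ _ (hweight _),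
    sum_Ici_zeroExtend_sub]

end WeightedDifferences

section WDSMatrices

variable {m k : ℕ}

lemma permMat_mulVec (θ : Equiv.Perm (Fin m)) (v : Fin m → ℝ) : permMat θ *ᵥ v = v ∘ θ := by
  funext i
  simp [permMat, mulVec, dotProduct]

lemma exists_WDSmat_mulVec_eq {x : Fin m → ℝ} (hx : 0 ≤ x) :
    ∃ (θ : Equiv.Perm (Fin m)) (y : Fin m → ℝ), 0 ≤ y ∧ WDSmat θ *ᵥ y = x := by
  let τ := Tuple.sort (OrderDual.toDual ∘ x)
  have hanti : Antitone (x ∘ τ) := Tuple.monotone_sort (OrderDual.toDual ∘ x)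
  refine ⟨τ⁻¹, weightedDiff (x ∘ τ), weightedDiff_nonneg (fun i => hx (τ i)) hanti, ?_⟩
  calc WDSmat τ⁻¹ *ᵥ weightedDiff (x ∘ τ)
      = (x ∘ τ) ∘ ⇑τ⁻¹ := by
        rw [WDSmat, ← mulVec_mulVec, Tmat_mulVec_weightedDiff, permMat_mulVec]
    _ = x := by
        funext i
        simp

lemma WDSprod_zero (θ : Fin 0 → Equiv.Perm (Fin m)) : WDSprod θ = 1 := by
  simp [WDSprod]

lemma WDSprod_cons (θ₀ : Equiv.Perm (Fin m)) (θ : Fin k → Equiv.Perm (Fin m)) :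
    WDSprod (Fin.cons θ₀ θ : Fin (k + 1) → Equiv.Perm (Fin m)) = WDSmat θ₀ * WDSprod θ := by
  simp [WDSprod, List.ofFn_succ]

lemma exists_WDSprod_mulVec_eq (k : ℕ) {x : Fin m → ℝ} (hx : 0 ≤ x) :
    ∃ (θ : Fin k → Equiv.Perm (Fin m)) (y : Fin m → ℝ), 0 ≤ y ∧ WDSprod θ *ᵥ y = x := by
  induction k generalizing x with
  | zero => exact ⟨Fin.elim0, x, hx, by rw [WDSprod_zero, one_mulVec]⟩
  | succ k ih =>
    obtain ⟨θ₀, y₀, hy₀, rfl⟩ := exists_WDSmat_mulVec_eq hx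
    obtain ⟨θ, y, hy, rfl⟩ := ih hy₀
    exact ⟨Fin.cons θ₀ θ, y, hy, by rw [WDSprod_cons, mulVec_mulVec]⟩

end WDSMatrices

theorem pos_on_simplex_of_wds_pos_coeffs_general {m k : ℕ} {f : MvPolynomial (Fin m) ℝ}
    (hnonneg : ∀ (θ : Fin k → Equiv.Perm (Fin m)) (α : Fin m →₀ ℕ),
      0 ≤ MvPolynomial.coeff α (linSubst (WDSprod θ) f))
    (hpow : ∀ (θ : Fin k → Equiv.Perm (Fin m)) (i : Fin m),
      ∃ n, 0 < MvPolynomial.coeff (Finsupp.single i n) (linSubst (WDSprod θ) f))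
    {x : Fin m → ℝ} (hx : 0 ≤ x) (hx₀ : x ≠ 0) : 0 < MvPolynomial.eval x f := by
  obtain ⟨θ, y, hy, rfl⟩ := exists_WDSprod_mulVec_eq k hx
  have hy₀ : y ≠ 0 := by
    rintro rfl
    exact hx₀ (mulVec_zero _)
  obtain ⟨i, hi⟩ : ∃ i, 0 < y i := (Pi.lt_def.1 (hy.lt_of_ne' hy₀)).2
  obtain ⟨n, hn⟩ := hpow θ i
  rw [← eval_linSubst]
  exact eval_pos_of_coeff_nonneg (hnonneg θ) hn hy hi

/-- If after `k` steps of weighted difference substitutions every resulting form has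
complete monomials with all positive coefficients, then the homogeneous polynomial `f`
of degree `d` is positive on the standard simplex. -/
theorem pos_on_simplex_of_wds_pos_coeffs (m d k : ℕ) (f : MvPolynomial (Fin m) ℝ)
    (hf : f.IsHomogeneous d)
    (h : ∀ θ : Fin k → Equiv.Perm (Fin m), ∀ α : Fin m →₀ ℕ, (∑ i, α i) = d →
      0 < MvPolynomial.coeff α (linSubst (WDSprod θ) f)) :
    ∀ x ∈ stdSimplex ℝ (Fin m), 0 < MvPolynomial.eval x f :=
  fun _ hx => pos_on_simplex_of_wds_pos_coeffs_general
    (fun θ => coeff_nonneg_of_isHomogeneous (isHomogeneous_linSubst (WDSprod θ) hf)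
      fun α hα => (h θ α (α.degree_eq_sum ▸ hα)).le)
    (fun θ i => ⟨d, h θ (Finsupp.single i d) (by simp [Finsupp.single_apply])⟩)
    hx.1 (ne_zero_of_mem_stdSimplex hx)
end
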